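/- For every d ≥ 3 there exists a finite family of closed balls in EuclideanSpace ℝ (Fin d) with positive radii and pairwise disjoint interiors (dist(c_i,c_j) ≥ r_i + r_j for i ≠ j) whose tangency graph has chromatic number at least d + 3. -/

import Mathlib

/-- The tangency graph of a family of balls with centers `c` and radii `r`:
two indices are adjacent iff they are distinct and the corresponding balls are
tangent. -/
def tangencyGraph {d n : ℕ} (c : Fin n → EuclideanSpace ℝ (Fin d)) (r : Fin n → ℝ) :
    SimpleGraph (Fin n) where
  Adj i j := i ≠ j ∧ dist (c i) (c j) = r i + r j
  symm := by
    constructor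
    rintro i j ⟨hij, h⟩
    exact ⟨hij.symm, by rwa [dist_comm, add_comm]⟩
  loopless := by
    constructor
    rintro i ⟨h, -⟩
    exact h rfl

/-!
In `ℝ^(d-1)`, arrange unit balls as a closed ring of bipyramids over regular simplices with `d - 1`
vertices, consecutive bipyramids sharing an apex and the first and last apex touching each other.
In a coloring with `d` colors the two apexes of a bipyramid both avoid the `d - 1` colors of its
base and hence agree, so all apexes would have the same color although two of them touch: the ring
needs `d + 1` colors. The angle at which the ring closes up comes from the intermediate value
theorem. Twelve bipyramids suffice to keep distinct bases apart: then the angle `a` between an apex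
and the adjacent base is at most `π / 12`, which gives `1 ≤ √2 * (cos a - sin a)`.

Now place the centers of these balls in a hyperplane of `ℝ^d` halfway between two parallel
hyperplanes touching all balls, and invert in a sphere. The two half-spaces beyond these hyperplanes
become tangent balls that touch all others, which forces two additional colors.
-/

open Module WithLp

section Coloring

variable {V V' κ α : Type*} [Fintype κ] {G : SimpleGraph V} {H : SimpleGraph V'}

lemma coloring_eq_of_adj_clique [Fintype α] {K : κ → V} {u v : V} (C : G.Coloring α)
    (hα : Fintype.card α ≤ Fintype.card κ + 1) (hK : Pairwise fun i j => G.Adj (K i) (K j))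
    (hu : ∀ i, G.Adj u (K i)) (hv : ∀ i, G.Adj v (K i)) : C u = C v := by
  classical
  let unused : Finset α := (Finset.univ.image (C ∘ K))ᶜ
  have mem_unused {w : V} (hw : ∀ i, G.Adj w (K i)) : C w ∈ unused := by
    simpa [unused] using fun i => (C.valid (hw i)).symm
  have card_unused : unused.card ≤ 1 := by
    rw [Finset.card_compl,
      Finset.card_image_of_injective _ (C.injective_comp_of_pairwise_adj K hK), Finset.card_univ]
    omega
  exact Finset.card_le_one.mp card_unused _ (mem_unused hu) _ (mem_unused hv)

lemma card_add_two_le_chromaticNumber_of_bipyramid_ring {N : ℕ} {u : Fin (N + 1) → V}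
    {K : Fin N → κ → V} (hK : ∀ l, Pairwise fun i j => G.Adj (K l i) (K l j))
    (hlower : ∀ l i, G.Adj (u l.castSucc) (K l i)) (hupper : ∀ l i, G.Adj (u l.succ) (K l i))
    (hclose : G.Adj (u 0) (u (Fin.last N))) :
    ((Fintype.card κ + 2 : ℕ) : ℕ∞) ≤ G.chromaticNumber := by
  refine SimpleGraph.le_chromaticNumber_iff_coloring.mpr fun n C => ?_
  by_contra! hn
  have hcard : Fintype.card (Fin n) ≤ Fintype.card κ + 1 := by
    rw [Fintype.card_fin]
    omega
  have apexes_eq (k : Fin (N + 1)) : C (u 0) = C (u k) := by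
    induction k using Fin.induction with
    | zero => rfl
    | succ l ih =>
      exact ih.trans <| coloring_eq_of_adj_clique C hcard (hK l) (hlower l) (hupper l)
  exact C.valid hclose (apexes_eq _)

lemma chromaticNumber_add_card_le_of_adj_clique {K : κ → V} (f : H →g G)
    (hK : Pairwise fun i j => G.Adj (K i) (K j)) (hKf : ∀ i v, G.Adj (K i) (f v)) :
    H.chromaticNumber + Fintype.card κ ≤ G.chromaticNumber := by
  classical
  refine le_iInf₂ fun n ⟨C⟩ => ?_
  let unused : Finset (Fin n) := (Finset.univ.image (C ∘ K))ᶜ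
  have hC : Function.Injective (C ∘ K) := C.injective_comp_of_pairwise_adj K hK
  have card_unused : unused.card + Fintype.card κ = n := by
    rw [← Finset.card_univ, ← Finset.card_image_of_injective _ hC, Finset.card_compl_add_card,
      Fintype.card_fin]
  let C' : H.Coloring unused := SimpleGraph.Coloring.mk
    (fun v => ⟨C (f v), by simpa [unused] using fun i => C.valid (hKf i v)⟩)
    fun hvw h => C.valid (f.map_adj hvw) (congrArg Subtype.val h)
  calc H.chromaticNumber + Fintype.card κ ≤ (unused.card : ℕ∞) + Fintype.card κ := by
        gcongr
        simpa using C'.colorable.chromaticNumber_le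
    _ = n := by exact_mod_cast card_unused

end Coloring

section Packing

variable {ι ι' P Q : Type*} [PseudoMetricSpace P] [PseudoMetricSpace Q] {c : ι → P} {r : ι → ℝ}

/-- The balls with centers `c` and positive radii `r` have disjoint interiors. This is the notion of
ball packing of the main theorem for an arbitrary index type and ambient space; `IsBallPacking c 1`
is a packing by unit balls. -/
structure IsBallPacking (c : ι → P) (r : ι → ℝ) : Prop where
  radius_pos : ∀ i, 0 < r i
  add_le_dist : Pairwise fun i j => r i + r j ≤ dist (c i) (c j)

/-- The tangency graph of a family of balls, for an arbitrary index type and ambient space. It is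
definitionally equal to `tangencyGraph` when both are defined. -/
def contactGraph (c : ι → P) (r : ι → ℝ) : SimpleGraph ι where
  Adj i j := i ≠ j ∧ dist (c i) (c j) = r i + r j
  symm := ⟨fun _ _ h => ⟨h.1.symm, by rw [dist_comm, add_comm, h.2]⟩⟩
  loopless := ⟨fun _ h => h.1 rfl⟩

lemma IsBallPacking.comp_injective {e : ι' → ι} (h : IsBallPacking c r)
    (he : Function.Injective e) : IsBallPacking (c ∘ e) (r ∘ e) :=
  ⟨fun i => h.radius_pos (e i), h.add_le_dist.comp_of_injective he⟩

lemma IsBallPacking.isometry_comp {f : P → Q} (h : IsBallPacking c r) (hf : Isometry f) :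
    IsBallPacking (f ∘ c) r :=
  ⟨h.radius_pos, fun _ _ hij => (h.add_le_dist hij).trans_eq (hf.dist_eq _ _).symm⟩

lemma contactGraph_isometry_comp {f : P → Q} (hf : Isometry f) :
    contactGraph (f ∘ c) r = contactGraph c r := by
  ext i j
  simp [contactGraph, hf.dist_eq]

lemma chromaticNumber_contactGraph_comp_equiv (e : ι' ≃ ι) :
    (contactGraph (c ∘ e) (r ∘ e)).chromaticNumber = (contactGraph c r).chromaticNumber :=
  SimpleGraph.chromaticNumber_congr ⟨e, by simp [contactGraph]⟩

end Packing

section ProductSpace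

lemma finrank_withLp_prod {K M M' : Type*} [Field K] [AddCommGroup M] [AddCommGroup M']
    [Module K M] [Module K M'] [FiniteDimensional K M] [FiniteDimensional K M'] (p : ENNReal) :
    finrank K (WithLp p (M × M')) = finrank K M + finrank K M' := by
  rw [(WithLp.linearEquiv p K (M × M')).finrank_eq, finrank_prod]

lemma dist_sq_withLp_prod {E F : Type*} [SeminormedAddCommGroup E] [SeminormedAddCommGroup F]
    (x y : WithLp 2 (E × F)) :
    dist x y ^ 2 = dist x.fst y.fst ^ 2 + dist x.snd y.snd ^ 2 := by
  rw [prod_dist_eq_of_L2, Real.sq_sqrt (by positivity)]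

end ProductSpace

section Euclidean

variable {E F : Type*} [NormedAddCommGroup E] [InnerProductSpace ℝ E]
  [NormedAddCommGroup F] [InnerProductSpace ℝ F]

lemma nonempty_linearIsometryEquiv_of_finrank_eq [FiniteDimensional ℝ E] [FiniteDimensional ℝ F]
    (h : finrank ℝ E = finrank ℝ F) : Nonempty (E ≃ₗᵢ[ℝ] F) :=
  ⟨(stdOrthonormalBasis ℝ E).equiv (stdOrthonormalBasis ℝ F) (finCongr h)⟩

variable {κ : Type*} [Fintype κ]

/-- The vertices of a regular simplex with edge length `2` and barycenter the origin, inside the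
hyperplane of `EuclideanSpace ℝ κ` on which the coordinates sum to zero. -/
noncomputable def regularSimplexVertex [DecidableEq κ] (i : κ) : EuclideanSpace ℝ κ :=
  √2 • (EuclideanSpace.single i 1 - (Fintype.card κ : ℝ)⁻¹ • toLp 2 1)

lemma norm_toLp_one_sq : ‖(toLp 2 1 : EuclideanSpace ℝ κ)‖ ^ 2 = Fintype.card κ := by
  simp [EuclideanSpace.norm_sq_eq]

lemma inner_one_single [DecidableEq κ] (i : κ) :
    inner ℝ (toLp 2 1 : EuclideanSpace ℝ κ) (EuclideanSpace.single i 1) = 1 := by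
  simp [EuclideanSpace.inner_single_right]

lemma inner_one_regularSimplexVertex [DecidableEq κ] (i : κ) :
    inner ℝ (toLp 2 1) (regularSimplexVertex i) = 0 := by
  have : Nonempty κ := ⟨i⟩
  have hcard : (Fintype.card κ : ℝ) ≠ 0 := Nat.cast_ne_zero.mpr Fintype.card_ne_zero
  rw [regularSimplexVertex, inner_smul_right, inner_sub_right, inner_one_single, inner_smul_right,
    real_inner_self_eq_norm_sq, norm_toLp_one_sq, inv_mul_cancel₀ hcard, sub_self, mul_zero]

lemma norm_regularSimplexVertex_sq [DecidableEq κ] (i : κ) :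
    ‖regularSimplexVertex i‖ ^ 2 = 2 - 2 / Fintype.card κ := by
  have : Nonempty κ := ⟨i⟩
  rw [regularSimplexVertex, norm_smul, mul_pow, norm_sub_sq_real, norm_smul, mul_pow,
    norm_toLp_one_sq, inner_smul_right, real_inner_comm, inner_one_single, PiLp.norm_single]
  simp only [Real.norm_eq_abs, sq_abs, Nat.ofNat_nonneg, Real.sq_sqrt]
  field_simp
  ring

lemma dist_regularSimplexVertex [DecidableEq κ] {i j : κ} (hij : i ≠ j) :
    dist (regularSimplexVertex i) (regularSimplexVertex j) = 2 := by
  have inner_single :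
      inner ℝ (EuclideanSpace.single i (1 : ℝ)) (EuclideanSpace.single j 1) = 0 := by
    simp [EuclideanSpace.inner_single_left, hij]
  refine (sq_eq_sq₀ dist_nonneg zero_le_two).mp ?_
  rw [regularSimplexVertex, regularSimplexVertex, dist_smul₀, dist_sub_right, mul_pow, dist_eq_norm,
    norm_sub_sq_real, inner_single]
  norm_num

lemma exists_regular_simplex [FiniteDimensional ℝ E]
    (h : Fintype.card κ = finrank ℝ E + 1) :
    ∃ q : κ → E, (∀ i, ‖q i‖ ^ 2 = 2 - 2 / Fintype.card κ) ∧
      Pairwise fun i j => dist (q i) (q j) = 2 := by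
  classical
  have : Nonempty κ := Fintype.card_pos_iff.mp (by omega)
  let ones : EuclideanSpace ℝ κ := toLp 2 1
  have ones_ne : ones ≠ 0 := by simp [ones]
  have : Fact (finrank ℝ (EuclideanSpace ℝ κ) = finrank ℝ E + 1) := ⟨by simpa using h⟩
  obtain ⟨f⟩ := nonempty_linearIsometryEquiv_of_finrank_eq
    (Submodule.finrank_orthogonal_span_singleton (𝕜 := ℝ) (n := finrank ℝ E) ones_ne)
  refine ⟨fun i => f ⟨regularSimplexVertex i, Submodule.mem_orthogonal_singleton_iff_inner_right.mpr
    (inner_one_regularSimplexVertex i)⟩, fun i => ?_, fun i j hij => ?_⟩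
  · simpa using norm_regularSimplexVertex_sq i
  · simpa [Subtype.dist_eq] using dist_regularSimplexVertex hij

end Euclidean

section Angles

open Real

lemma sin_le_sin_of_mem_Icc_pi_sub {a x : ℝ} (ha : 0 ≤ a) (hx : x ∈ Set.Icc a (π - a)) :
    sin a ≤ sin x := by
  obtain ⟨hax, hxa⟩ := hx
  have hsin : 0 ≤ sin ((x - a) / 2) := sin_nonneg_of_nonneg_of_le_pi (by linarith) (by linarith)
  have hcos : 0 ≤ cos ((x + a) / 2) := cos_nonneg_of_mem_Icc ⟨by linarith, by linarith⟩
  rw [← sub_nonneg, sin_sub_sin]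
  positivity

lemma one_le_sqrt_two_mul_cos_sub_sin {a : ℝ} (ha : 0 ≤ a) (ha' : a ≤ π / 12) :
    1 ≤ √2 * (cos a - sin a) := by
  have hcos : cos (π / 3) ≤ cos (a + π / 4) :=
    cos_le_cos_of_nonneg_of_le_pi (by positivity) (by linarith) (by linarith)
  rw [cos_pi_div_three, cos_add, cos_pi_div_four, sin_pi_div_four] at hcos
  linarith

lemma norm_mul_exp_sub_mul_exp_sq (A B α β : ℝ) :
    ‖(A * Complex.exp (α * Complex.I) - B * Complex.exp (β * Complex.I) : ℂ)‖ ^ 2 =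
      (A - B) ^ 2 + 4 * A * B * sin ((α - β) / 2) ^ 2 := by
  have hsin : 2 * sin ((α - β) / 2) ^ 2 = 1 - (cos α * cos β + sin α * sin β) := by
    rw [← cos_sub, sin_sq_eq_half_sub, mul_div_cancel₀ _ two_ne_zero]
    ring
  rw [Complex.sq_norm, Complex.normSq_apply]
  simp only [Complex.sub_re, Complex.mul_re, Complex.ofReal_re, Complex.exp_ofReal_mul_I_re,
    Complex.ofReal_im, Complex.exp_ofReal_mul_I_im, zero_mul, sub_zero, Complex.sub_im,
    Complex.mul_im, add_zero]
  linear_combination A ^ 2 * sin_sq_add_cos_sq α + B ^ 2 * sin_sq_add_cos_sq β - 2 * A * B * hsin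

/-- On a circle of radius `R`, the points at angles `0, 2a, 4a, …, 2Na` make at most one turn,
consecutive points have distance `2s`, and the last point has distance `2` from the first. The
bound on the angle keeps the closing gap `2π - 2Na` at least `a`. -/
structure IsRingPolygon (N : ℕ) (s R a : ℝ) : Prop where
  angle_pos : 0 < a
  angle_le : (2 * N + 1) * a ≤ 2 * π
  half_chord : R * sin a = s
  half_closing_chord : R * sin (N * a) = 1

lemma exists_mul_sin_eq_sin {N : ℕ} (hN : 3 ≤ N) {s : ℝ} (hs : 1 ≤ s) (hs' : s ≤ √3) :
    ∃ a ∈ Set.Icc (π / (N + 1)) (2 * π / (2 * N + 1)), s * sin (N * a) = sin a := by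
  have hN' : (3 : ℝ) ≤ N := mod_cast hN
  have hcont : ContinuousOn (fun a => s * sin (N * a) - sin a)
      (Set.Icc (π / (N + 1)) (2 * π / (2 * N + 1))) := by fun_prop
  have hle : π / (N + 1) ≤ 2 * π / (2 * N + 1) := by
    rw [div_le_div_iff₀ (by positivity) (by positivity)]
    linarith [pi_pos]
  have left_nonneg : 0 ≤ s * sin (N * (π / (N + 1))) - sin (π / (N + 1)) := by
    have hangle : N * (π / (N + 1)) = π - π / (N + 1) := by field_simp; ring
    have hsin : 0 ≤ sin (π / (N + 1)) :=
      sin_nonneg_of_nonneg_of_le_pi (by positivity) (div_le_self pi_pos.le (by linarith))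
    rw [hangle, sin_pi_sub]
    nlinarith
  have right_nonpos :
      s * sin (N * (2 * π / (2 * N + 1))) - sin (2 * π / (2 * N + 1)) ≤ 0 := by
    set b := π / (2 * N + 1) with hb
    have hb6 : b ≤ π / 6 := by rw [hb]; gcongr; linarith
    have hangle : N * (2 * π / (2 * N + 1)) = π - b := by rw [hb]; field_simp; ring
    have hangle' : 2 * π / (2 * N + 1) = 2 * b := by rw [hb]; ring
    have hsin : 0 ≤ sin b := sin_nonneg_of_nonneg_of_le_pi (by positivity) (by linarith [pi_pos])
    have hcos : s ≤ 2 * cos b := by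
      have : cos (π / 6) ≤ cos b :=
        cos_le_cos_of_nonneg_of_le_pi (by positivity) (by linarith [pi_pos]) hb6
      rw [cos_pi_div_six] at this
      linarith
    rw [hangle, hangle', sin_pi_sub, sin_two_mul]
    nlinarith
  obtain ⟨a, ha, hroot⟩ := intermediate_value_Icc' hle hcont ⟨right_nonpos, left_nonneg⟩
  exact ⟨a, ha, sub_eq_zero.mp hroot⟩

lemma exists_isRingPolygon {N : ℕ} (hN : 3 ≤ N) {s : ℝ} (hs : 1 ≤ s) (hs' : s ≤ √3) :
    ∃ R a, IsRingPolygon N s R a := by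
  obtain ⟨a, ⟨hleft, hright⟩, hroot⟩ := exists_mul_sin_eq_sin hN hs hs'
  have hN' : (3 : ℝ) ≤ N := mod_cast hN
  rw [le_div_iff₀ (by positivity)] at hright
  have ha : 0 < a := lt_of_lt_of_le (by positivity) hleft
  have hsin : sin a ≠ 0 := (sin_pos_of_pos_of_lt_pi ha (by nlinarith)).ne'
  refine ⟨s / sin a, a, ha, by linarith, div_mul_cancel₀ s hsin, ?_⟩
  rw [div_mul_eq_mul_div, hroot, div_self hsin]

end Angles

section BipyramidRing

open Real

variable {W κ : Type*} [NormedAddCommGroup W]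
  {N : ℕ} {s R a A B α β : ℝ} {w w' : W} {q : κ → WithLp 2 (ℝ × W)}

/-- The point of `ℂ × W` with polar coordinates `(A, α)` in the plane and `W`-component `w`. -/
noncomputable def cylindricalPoint (A α : ℝ) (w : W) : WithLp 2 (ℂ × W) :=
  toLp 2 (A * Complex.exp (α * Complex.I), w)

lemma dist_cylindricalPoint_sq : dist (cylindricalPoint A α w) (cylindricalPoint B β w') ^ 2 =
    (A - B) ^ 2 + 4 * A * B * sin ((α - β) / 2) ^ 2 + dist w w' ^ 2 := by
  rw [dist_sq_withLp_prod, ← norm_mul_exp_sub_mul_exp_sq, ← dist_eq_norm]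
  rfl

lemma IsRingPolygon.sin_pos (h : IsRingPolygon N s R a) (hN : 1 ≤ N) : 0 < sin a := by
  have hN' : (1 : ℝ) ≤ N := mod_cast hN
  have := h.angle_pos
  exact sin_pos_of_pos_of_lt_pi h.angle_pos (by nlinarith [h.angle_le])

lemma IsRingPolygon.two_le_dist_cylindricalPoint (h : IsRingPolygon N s R a) (hN : 1 ≤ N)
    (hA : 1 ≤ A * sin a) (hB : 1 ≤ B * sin a) {j k : ℕ} (hjk : j + 2 ≤ k)
    (hkj : k + 1 ≤ j + 2 * N) :
    2 ≤ dist (cylindricalPoint A (j * a) w) (cylindricalPoint B (k * a) w') := by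
  have ha := h.angle_pos
  have hjk' : (j + 2 : ℝ) ≤ k := mod_cast hjk
  have hkj' : (k + 1 : ℝ) ≤ j + 2 * N := mod_cast hkj
  have hsin : 0 < sin a := h.sin_pos hN
  have hle : sin a ≤ sin ((k * a - j * a) / 2) :=
    sin_le_sin_of_mem_Icc_pi_sub ha.le ⟨by nlinarith, by nlinarith [h.angle_le]⟩
  have hA0 : 0 < A := pos_of_mul_pos_left (by linarith) hsin.le
  have hB0 : 0 < B := pos_of_mul_pos_left (by linarith) hsin.le
  rw [dist_comm]
  refine (sq_le_sq₀ zero_le_two dist_nonneg).mp ?_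
  calc (2 : ℝ) ^ 2 ≤ 4 * ((B * sin a) * (A * sin a)) := by nlinarith
    _ = 4 * B * A * sin a ^ 2 := by ring
    _ ≤ 4 * B * A * sin ((k * a - j * a) / 2) ^ 2 := by gcongr
    _ ≤ _ := by rw [dist_cylindricalPoint_sq]; nlinarith [sq_nonneg (B - A), sq_nonneg (dist w' w)]

/-- Centers of a ring of `N` bipyramids. The apexes `Sum.inl k` lie at the even multiples of `a` on
the circle of radius `R` in the plane `ℂ`. The base `Sum.inr (l, ·)` is a copy of `q` in the
hyperplane through the axis `W` at the odd multiple `(2l + 1)a`, which bisects the segment between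
the apexes `l` and `l + 1`; the copy is centered at the midpoint of that segment, with the first
component of `q` in the radial direction. -/
noncomputable def bipyramidRing (N : ℕ) (R a : ℝ) (q : κ → WithLp 2 (ℝ × W)) :
    Fin (N + 1) ⊕ Fin N × κ → WithLp 2 (ℂ × W)
  | .inl k => cylindricalPoint R ((2 * k : ℕ) * a) 0
  | .inr (l, i) => cylindricalPoint (R * cos a + (q i).fst) ((2 * l + 1 : ℕ) * a) (q i).snd

lemma dist_bipyramidRing_base_base (l : Fin N) (i j : κ) :
    dist (bipyramidRing N R a q (.inr (l, i))) (bipyramidRing N R a q (.inr (l, j))) =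
      dist (q i) (q j) := by
  refine (sq_eq_sq₀ dist_nonneg dist_nonneg).mp ?_
  rw [bipyramidRing, bipyramidRing, dist_cylindricalPoint_sq, dist_sq_withLp_prod, sub_self,
    zero_div, sin_zero, Real.dist_eq, sq_abs]
  ring

lemma IsRingPolygon.dist_bipyramidRing_apex_base (h : IsRingPolygon N s R a)
    (hq : ∀ i, ‖q i‖ ^ 2 = 4 - s ^ 2) {k : Fin (N + 1)} {l : Fin N}
    (hkl : (k : ℕ) = l ∨ (k : ℕ) = l + 1) (i : κ) :
    dist (bipyramidRing N R a q (.inl k)) (bipyramidRing N R a q (.inr (l, i))) = 2 := by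
  have hsin : 2 * sin (((2 * k : ℕ) * a - (2 * l + 1 : ℕ) * a) / 2) ^ 2 = 1 - cos a := by
    have hangle : (2 * k : ℕ) * a - (2 * l + 1 : ℕ) * a = a ∨
        (2 * k : ℕ) * a - (2 * l + 1 : ℕ) * a = -a := by
      rcases hkl with hkl | hkl <;> rw [hkl] <;> push_cast
      · right; ring
      · left; ring
    rw [sin_sq_eq_half_sub, mul_div_cancel₀ _ two_ne_zero]
    rcases hangle with hangle | hangle <;> rw [hangle]
    · ring
    · rw [cos_neg]; ring
  have hqi : (q i).fst ^ 2 + ‖(q i).snd‖ ^ 2 = 4 - s ^ 2 := by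
    rw [← hq i, prod_norm_sq_eq_of_L2, Real.norm_eq_abs, sq_abs]
  refine (sq_eq_sq₀ dist_nonneg zero_le_two).mp ?_
  rw [bipyramidRing, bipyramidRing, dist_cylindricalPoint_sq, dist_zero_left]
  linear_combination 2 * R * (R * cos a + (q i).fst) * hsin + hqi +
    (R * sin a + s) * h.half_chord - R ^ 2 * sin_sq_add_cos_sq a

lemma IsRingPolygon.dist_bipyramidRing_apex_zero_apex_last (h : IsRingPolygon N s R a) :
    dist (bipyramidRing N R a q (.inl 0)) (bipyramidRing N R a q (.inl (Fin.last N))) = 2 := by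
  have hangle : (2 * (0 : Fin (N + 1)) : ℕ) * a - (2 * (Fin.last N : Fin (N + 1)) : ℕ) * a =
      -(2 * (N * a)) := by
    simp only [Fin.val_zero, Fin.val_last]
    push_cast
    ring
  refine (sq_eq_sq₀ dist_nonneg zero_le_two).mp ?_
  rw [bipyramidRing, bipyramidRing, dist_cylindricalPoint_sq, hangle, dist_self, neg_div,
    mul_div_cancel_left₀ _ two_ne_zero, sin_neg]
  linear_combination 4 * (R * sin (N * a) + 1) * h.half_closing_chord

lemma IsRingPolygon.one_le_base_radius_mul_sin (h : IsRingPolygon N s R a) (hN : 12 ≤ N)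
    (hs : √2 ≤ s) {t : ℝ} (ht : |t| ≤ √2) : 1 ≤ (R * cos a + t) * sin a := by
  have hN' : (12 : ℝ) ≤ N := mod_cast hN
  have ha := h.angle_pos
  have ha' : a ≤ π / 12 := by nlinarith [h.angle_le]
  have hsin : 0 ≤ sin a := (h.sin_pos (by omega)).le
  have hcos : 0 ≤ cos a := cos_nonneg_of_mem_Icc ⟨by linarith [pi_pos], by linarith [pi_pos]⟩
  calc 1 ≤ √2 * (cos a - sin a) := one_le_sqrt_two_mul_cos_sub_sin ha.le ha'
    _ = √2 * cos a + -√2 * sin a := by ring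
    _ ≤ s * cos a + t * sin a := by gcongr; exact (abs_le.mp ht).1
    _ = (R * cos a + t) * sin a := by rw [← h.half_chord]; ring

lemma IsRingPolygon.two_le_dist_bipyramidRing_apex_apex (h : IsRingPolygon N s R a)
    (hN : 1 ≤ N) (hs : 1 ≤ s) {k k' : Fin (N + 1)} (hk : k < k') :
    2 ≤ dist (bipyramidRing N R a q (.inl k)) (bipyramidRing N R a q (.inl k')) := by
  by_cases hfar : (k : ℕ) = 0 ∧ (k' : ℕ) = N
  · obtain rfl : k = 0 := Fin.ext hfar.1
    obtain rfl : k' = Fin.last N := Fin.ext hfar.2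
    exact h.dist_bipyramidRing_apex_zero_apex_last.ge
  · have hR : 1 ≤ R * sin a := h.half_chord.symm ▸ hs
    exact h.two_le_dist_cylindricalPoint hN hR hR (by omega) (by omega)

lemma IsRingPolygon.two_le_dist_bipyramidRing_apex_base (h : IsRingPolygon N s R a)
    (hN : 1 ≤ N) (hs : 1 ≤ s) (hq : ∀ i, ‖q i‖ ^ 2 = 4 - s ^ 2) {i : κ}
    (hi : 1 ≤ (R * cos a + (q i).fst) * sin a) (k : Fin (N + 1)) (l : Fin N) :
    2 ≤ dist (bipyramidRing N R a q (.inl k)) (bipyramidRing N R a q (.inr (l, i))) := by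
  have hR : 1 ≤ R * sin a := h.half_chord.symm ▸ hs
  obtain hnear | hlt | hgt : ((k : ℕ) = l ∨ (k : ℕ) = l + 1) ∨ (k : ℕ) < l ∨ (l + 1 : ℕ) < k := by
    omega
  · exact (h.dist_bipyramidRing_apex_base hq hnear i).ge
  · exact h.two_le_dist_cylindricalPoint hN hR hi (by omega) (by omega)
  · rw [dist_comm]
    exact h.two_le_dist_cylindricalPoint hN hi hR (by omega) (by omega)

lemma IsRingPolygon.isBallPacking_bipyramidRing (h : IsRingPolygon N s R a) (hN : 12 ≤ N)
    (hs : √2 ≤ s) (hq : ∀ i, ‖q i‖ ^ 2 = 4 - s ^ 2)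
    (hqd : Pairwise fun i j => dist (q i) (q j) = 2) :
    IsBallPacking (bipyramidRing N R a q) 1 := by
  have hN' : 1 ≤ N := by omega
  have hs' : 1 ≤ s := (one_le_sqrt.mpr one_le_two).trans hs
  have hbase (i : κ) : 1 ≤ (R * cos a + (q i).fst) * sin a := by
    refine h.one_le_base_radius_mul_sin hN hs (abs_le_sqrt ?_)
    have hqi := prod_norm_sq_eq_of_L2 (q i)
    rw [hq, Real.norm_eq_abs, sq_abs] at hqi
    nlinarith [sq_nonneg ‖(q i).snd‖, sq_sqrt zero_le_two, sqrt_nonneg 2]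
  have base_base {l l' : Fin N} (hl : l < l') (i j : κ) :
      2 ≤ dist (bipyramidRing N R a q (.inr (l, i))) (bipyramidRing N R a q (.inr (l', j))) :=
    h.two_le_dist_cylindricalPoint hN' (hbase i) (hbase j) (by omega) (by omega)
  refine ⟨fun _ => one_pos, fun v w hvw => ?_⟩
  simp only [Pi.one_apply, one_add_one_eq_two]
  match v, w with
  | .inl k, .inl k' =>
    obtain hk | hk := lt_or_gt_of_ne (show k ≠ k' by simpa using hvw)
    · exact h.two_le_dist_bipyramidRing_apex_apex hN' hs' hk
    · rw [dist_comm]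
      exact h.two_le_dist_bipyramidRing_apex_apex hN' hs' hk
  | .inl k, .inr (l, i) => exact h.two_le_dist_bipyramidRing_apex_base hN' hs' hq (hbase i) k l
  | .inr (l, i), .inl k =>
    rw [dist_comm]
    exact h.two_le_dist_bipyramidRing_apex_base hN' hs' hq (hbase i) k l
  | .inr (l, i), .inr (l', j) =>
    obtain hl | rfl | hl := lt_trichotomy l l'
    · exact base_base hl i j
    · exact ((dist_bipyramidRing_base_base l i j).trans (hqd (by simpa using hvw))).ge
    · rw [dist_comm]
      exact base_base hl j i

lemma IsRingPolygon.card_add_two_le_chromaticNumber_bipyramidRing [Fintype κ]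
    (h : IsRingPolygon N s R a) (hN : 1 ≤ N) (hq : ∀ i, ‖q i‖ ^ 2 = 4 - s ^ 2)
    (hqd : Pairwise fun i j => dist (q i) (q j) = 2) :
    ((Fintype.card κ + 2 : ℕ) : ℕ∞) ≤
      (contactGraph (bipyramidRing N R a q) 1).chromaticNumber := by
  have adj_iff {v w} : (contactGraph (bipyramidRing N R a q) 1).Adj v w ↔
      v ≠ w ∧ dist (bipyramidRing N R a q v) (bipyramidRing N R a q w) = 2 := by
    simp [contactGraph, one_add_one_eq_two]
  have apexes_ne : (0 : Fin (N + 1)) ≠ Fin.last N := by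
    rw [Ne, Fin.ext_iff, Fin.val_zero, Fin.val_last]
    omega
  refine card_add_two_le_chromaticNumber_of_bipyramid_ring (u := Sum.inl)
    (K := fun l i => Sum.inr (l, i)) (fun l i j hij => ?_) (fun l i => ?_) (fun l i => ?_) ?_
  · exact adj_iff.mpr ⟨by simpa using hij, (dist_bipyramidRing_base_base l i j).trans (hqd hij)⟩
  · exact adj_iff.mpr ⟨by simp, h.dist_bipyramidRing_apex_base hq (.inl (by simp)) i⟩
  · exact adj_iff.mpr ⟨by simp, h.dist_bipyramidRing_apex_base hq (.inr (by simp)) i⟩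
  · exact adj_iff.mpr ⟨Sum.inl_injective.ne apexes_ne, h.dist_bipyramidRing_apex_zero_apex_last⟩

lemma exists_unit_ballPacking_chromaticNumber_ge {E : Type*} [NormedAddCommGroup E]
    [InnerProductSpace ℝ E] (hE : 2 ≤ finrank ℝ E) :
    ∃ (ι : Type) (_ : Finite ι) (X : ι → E), IsBallPacking X 1 ∧
      ((finrank ℝ E + 2 : ℕ) : ℕ∞) ≤ (contactGraph X 1).chromaticNumber := by
  have : FiniteDimensional ℝ E := .of_finrank_pos (by omega)
  obtain ⟨m, hm⟩ := Nat.exists_eq_add_of_le' hE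
  let W := EuclideanSpace ℝ (Fin m)
  obtain ⟨q, hq, hqd⟩ := exists_regular_simplex (E := WithLp 2 (ℝ × W)) (κ := Fin (m + 2))
    (by simp [W, finrank_withLp_prod, add_comm, add_left_comm])
  let s := √(2 + 2 / (m + 2))
  have hs_sq : s ^ 2 = 2 + 2 / (m + 2) := sq_sqrt (by positivity)
  have hs : √2 ≤ s := sqrt_le_sqrt (le_add_of_nonneg_right (by positivity))
  have hs' : s ≤ √3 := by
    refine sqrt_le_sqrt ?_
    have : (2 : ℝ) / (m + 2) ≤ 1 := (div_le_one (by positivity)).mpr (by simp)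
    linarith
  obtain ⟨R, a, h⟩ := exists_isRingPolygon (N := 12) (by norm_num)
    ((one_le_sqrt.mpr one_le_two).trans hs) hs'
  have hq' (i) : ‖q i‖ ^ 2 = 4 - s ^ 2 := by
    rw [hq, hs_sq, Fintype.card_fin]
    push_cast
    ring
  obtain ⟨f⟩ : Nonempty (WithLp 2 (ℂ × W) ≃ₗᵢ[ℝ] E) :=
    nonempty_linearIsometryEquiv_of_finrank_eq
      (by simp [W, finrank_withLp_prod, hm, add_comm])
  refine ⟨_, inferInstance, f ∘ bipyramidRing 12 R a q,
    (h.isBallPacking_bipyramidRing le_rfl hs hq' hqd).isometry_comp f.isometry, ?_⟩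
  rw [contactGraph_isometry_comp f.isometry, hm]
  simpa using h.card_add_two_le_chromaticNumber_bipyramidRing (by norm_num) hq' hqd

end BipyramidRing

section Suspension

section Normed

variable {ι E : Type*} [NormedAddCommGroup E] {x : E} {X : ι → E}

/-- Inversion in the unit sphere maps the unit ball centered at `x` to the ball of this radius
centered at `invertedRadius x • x`, provided the origin lies outside the ball, i.e. `1 < ‖x‖`. -/
noncomputable def invertedRadius (x : E) : ℝ := (‖x‖ ^ 2 - 1)⁻¹

lemma invertedRadius_pos (hx : 1 < ‖x‖) : 0 < invertedRadius x :=
  inv_pos.mpr (sub_pos.mpr (one_lt_pow₀ hx two_ne_zero))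

lemma invertedRadius_mul_norm_sq_sub_one (hx : 1 < ‖x‖) :
    invertedRadius x * (‖x‖ ^ 2 - 1) = 1 :=
  inv_mul_cancel₀ (inv_pos.mp (invertedRadius_pos hx)).ne'

/-- Radii of the suspension of a unit ball packing, see `suspensionCenter`. -/
noncomputable def suspensionRadius (X : ι → E) : Bool ⊕ ι → ℝ
  | .inl _ => 1 / 2
  | .inr i => invertedRadius (X i)

lemma suspensionRadius_pos (hX : ∀ i, 1 < ‖X i‖) (v : Bool ⊕ ι) : 0 < suspensionRadius X v :=
  match v with
  | .inl _ => one_half_pos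
  | .inr i => invertedRadius_pos (hX i)

variable [NormedSpace ℝ E]

lemma norm_invertedRadius_smul_sq (hx : 1 < ‖x‖) :
    ‖invertedRadius x • x‖ ^ 2 = invertedRadius x ^ 2 + invertedRadius x := by
  rw [norm_smul, mul_pow, Real.norm_eq_abs, sq_abs]
  linear_combination invertedRadius x * invertedRadius_mul_norm_sq_sub_one hx

/-- Centers of the suspension of a unit ball packing `X` in `E` to `ℝ × E`: the images of the unit
balls centered at `(0, X i)` and of the half-spaces `z ≤ -1` and `1 ≤ z` under inversion in the unit
sphere. -/
noncomputable def suspensionCenter (X : ι → E) : Bool ⊕ ι → WithLp 2 (ℝ × E)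
  | .inl b => toLp 2 (bif b then 1 / 2 else -(1 / 2), 0)
  | .inr i => toLp 2 (0, invertedRadius (X i) • X i)

lemma dist_suspensionCenter_pole_pole {b b' : Bool} (hb : b ≠ b') :
    dist (suspensionCenter X (.inl b)) (suspensionCenter X (.inl b')) =
      suspensionRadius X (.inl b) + suspensionRadius X (.inl b') := by
  refine (sq_eq_sq₀ dist_nonneg (by norm_num [suspensionRadius])).mp ?_
  rw [dist_sq_withLp_prod]
  obtain ⟨rfl, rfl⟩ | ⟨rfl, rfl⟩ : b = true ∧ b' = false ∨ b = false ∧ b' = true := by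
    revert b b'; decide
  all_goals norm_num [suspensionCenter, suspensionRadius, Real.dist_eq]

lemma dist_suspensionCenter_pole_equator (b : Bool) {i : ι} (hi : 1 < ‖X i‖) :
    dist (suspensionCenter X (.inl b)) (suspensionCenter X (.inr i)) =
      suspensionRadius X (.inl b) + suspensionRadius X (.inr i) := by
  have hpos := invertedRadius_pos hi
  refine (sq_eq_sq₀ dist_nonneg (by simp only [suspensionRadius]; positivity)).mp ?_
  rw [dist_sq_withLp_prod]
  simp only [suspensionCenter, suspensionRadius, toLp_fst, toLp_snd, dist_zero_left,
    norm_invertedRadius_smul_sq hi, dist_zero_right]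
  cases b <;> norm_num <;> ring

lemma exists_forall_one_lt_norm_add [Finite ι] [Nontrivial E] (X : ι → E) :
    ∃ v, ∀ i, 1 < ‖X i + v‖ := by
  obtain ⟨C, hC⟩ := (Set.finite_range fun i => ‖X i‖).bddAbove
  obtain ⟨v, hv⟩ := NormedSpace.exists_lt_norm ℝ E (C + 1)
  refine ⟨v, fun i => ?_⟩
  have hi : ‖X i‖ ≤ C := hC ⟨i, rfl⟩
  have := norm_sub_le (X i + v) (X i)
  rw [add_sub_cancel_left] at this
  linarith

end Normed

variable {ι E : Type*} [NormedAddCommGroup E] [InnerProductSpace ℝ E] {x y : E} {X : ι → E}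

lemma dist_invertedRadius_smul_sq (hx : 1 < ‖x‖) (hy : 1 < ‖y‖) :
    dist (invertedRadius x • x) (invertedRadius y • y) ^ 2 =
      (invertedRadius x + invertedRadius y) ^ 2 +
        invertedRadius x * invertedRadius y * (dist x y ^ 2 - 2 ^ 2) := by
  rw [dist_eq_norm, dist_eq_norm, norm_sub_sq_real, norm_sub_sq_real,
    norm_invertedRadius_smul_sq hx, norm_invertedRadius_smul_sq hy, real_inner_smul_left,
    real_inner_smul_right]
  linear_combination -invertedRadius y * invertedRadius_mul_norm_sq_sub_one hx -
    invertedRadius x * invertedRadius_mul_norm_sq_sub_one hy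

lemma dist_suspensionCenter_equator_equator_sq {i j : ι} (hi : 1 < ‖X i‖) (hj : 1 < ‖X j‖) :
    dist (suspensionCenter X (.inr i)) (suspensionCenter X (.inr j)) ^ 2 =
      (suspensionRadius X (.inr i) + suspensionRadius X (.inr j)) ^ 2 +
        invertedRadius (X i) * invertedRadius (X j) * (dist (X i) (X j) ^ 2 - 2 ^ 2) := by
  rw [dist_sq_withLp_prod]
  simp only [suspensionCenter, suspensionRadius, toLp_fst, toLp_snd, dist_self,
    dist_invertedRadius_smul_sq hi hj]
  ring

lemma IsBallPacking.suspension (h : IsBallPacking X 1) (hX : ∀ i, 1 < ‖X i‖) :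
    IsBallPacking (suspensionCenter X) (suspensionRadius X) := by
  refine ⟨suspensionRadius_pos hX, fun v w hvw => ?_⟩
  beta_reduce
  match v, w with
  | .inl b, .inl b' => exact (dist_suspensionCenter_pole_pole (by simpa using hvw)).ge
  | .inl b, .inr i => exact (dist_suspensionCenter_pole_equator b (hX i)).ge
  | .inr i, .inl b =>
    rw [dist_comm, add_comm]
    exact (dist_suspensionCenter_pole_equator b (hX i)).ge
  | .inr i, .inr j =>
    have hi := invertedRadius_pos (hX i)
    have hj := invertedRadius_pos (hX j)
    have hdist : 2 ≤ dist (X i) (X j) := by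
      simpa [one_add_one_eq_two] using h.add_le_dist (show i ≠ j by simpa using hvw)
    have hsq : 0 ≤ dist (X i) (X j) ^ 2 - 2 ^ 2 := sub_nonneg.mpr (by gcongr)
    refine (sq_le_sq₀ (add_pos hi hj).le dist_nonneg).mp ?_
    rw [dist_suspensionCenter_equator_equator_sq (hX i) (hX j)]
    exact le_add_of_nonneg_right (by positivity)

lemma chromaticNumber_add_two_le_contactGraph_suspension (hX : ∀ i, 1 < ‖X i‖) :
    (contactGraph X 1).chromaticNumber + 2 ≤
      (contactGraph (suspensionCenter X) (suspensionRadius X)).chromaticNumber := by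
  let equator : contactGraph X 1 →g contactGraph (suspensionCenter X) (suspensionRadius X) :=
    { toFun := Sum.inr
      map_rel' := fun {i j} ⟨hij, hdist⟩ => by
        refine ⟨by simpa using hij, (sq_eq_sq₀ dist_nonneg
          (add_pos (suspensionRadius_pos hX _) (suspensionRadius_pos hX _)).le).mp ?_⟩
        rw [dist_suspensionCenter_equator_equator_sq (hX i) (hX j), hdist, Pi.one_apply,
          Pi.one_apply, one_add_one_eq_two]
        ring }
  exact chromaticNumber_add_card_le_of_adj_clique (K := Sum.inl) equator
    (fun b b' hb => ⟨by simpa using hb, dist_suspensionCenter_pole_pole hb⟩)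
    (fun b i => ⟨Sum.inl_ne_inr, dist_suspensionCenter_pole_equator b (hX i)⟩)

lemma IsBallPacking.exists_ballPacking_chromaticNumber_add_two_le [Finite ι] [Nontrivial E]
    (h : IsBallPacking X 1) : ∃ (c : Bool ⊕ ι → WithLp 2 (ℝ × E)) (r : Bool ⊕ ι → ℝ),
      IsBallPacking c r ∧
        (contactGraph X 1).chromaticNumber + 2 ≤ (contactGraph c r).chromaticNumber := by
  obtain ⟨v, hv⟩ := exists_forall_one_lt_norm_add X
  have htrans : Isometry (· + v) := isometry_add_right v
  refine ⟨_, _, (h.isometry_comp htrans).suspension hv, ?_⟩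
  rw [← contactGraph_isometry_comp htrans]
  exact chromaticNumber_add_two_le_contactGraph_suspension hv

end Suspension

/-- For every `d ≥ 3` there is a ball packing in dimension `d` whose tangency
graph has chromatic number at least `d + 3`. -/
theorem exists_ball_packing_chromatic_ge (d : ℕ) (hd : 3 ≤ d) :
    ∃ (n : ℕ) (c : Fin n → EuclideanSpace ℝ (Fin d)) (r : Fin n → ℝ),
      (∀ i, 0 < r i) ∧
      (∀ i j, i ≠ j → r i + r j ≤ dist (c i) (c j)) ∧
      ((d + 3 : ℕ) : ℕ∞) ≤ (tangencyGraph c r).chromaticNumber := by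
  obtain ⟨k, rfl⟩ := Nat.exists_eq_add_of_le' (Nat.one_le_of_lt hd)
  obtain ⟨ι, _, X, hX, hχX⟩ :=
    exists_unit_ballPacking_chromaticNumber_ge (E := EuclideanSpace ℝ (Fin k)) (by simpa using hd)
  have : Nontrivial (EuclideanSpace ℝ (Fin k)) :=
    Module.nontrivial_of_finrank_pos (R := ℝ) (by simp only [finrank_euclideanSpace_fin]; omega)
  obtain ⟨c, r, hc, hχc⟩ := hX.exists_ballPacking_chromaticNumber_add_two_le
  obtain ⟨f⟩ : Nonempty (WithLp 2 (ℝ × EuclideanSpace ℝ (Fin k)) ≃ₗᵢ[ℝ]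
      EuclideanSpace ℝ (Fin (k + 1))) :=
    nonempty_linearIsometryEquiv_of_finrank_eq (by simp [finrank_withLp_prod, add_comm])
  obtain ⟨n, ⟨e⟩⟩ := Finite.exists_equiv_fin (Bool ⊕ ι)
  have hf := f.isometry
  have hpack := (hc.isometry_comp hf).comp_injective e.symm.injective
  refine ⟨n, (f ∘ c) ∘ e.symm, r ∘ e.symm, hpack.radius_pos,
    fun _ _ hij => hpack.add_le_dist hij, ?_⟩
  calc ((k + 1 + 3 : ℕ) : ℕ∞) = ((k + 2 : ℕ) : ℕ∞) + 2 := by push_cast; ring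
    _ ≤ (contactGraph X 1).chromaticNumber + 2 := by gcongr; simpa using hχX
    _ ≤ (contactGraph (f ∘ c) r).chromaticNumber := by rwa [contactGraph_isometry_comp hf]
    _ = (tangencyGraph ((f ∘ c) ∘ e.symm) (r ∘ e.symm)).chromaticNumber :=
      (chromaticNumber_contactGraph_comp_equiv e.symm).symm
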